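/- Let n ∈ ℕ, K > 1, and let μ_1, …, μ_n be probability measures on ℝ^d. Let C_{K,d} = (8/Γ(d/2))·(d/(2e))^{d/2}·(1 + 1/(2K²)), and suppose 0 < α_1 ≤ α_2 ≤ ⋯ ≤ α_n < C_{K,d}^{−1}. Let m = log n / log(3/2) and r > 0. Suppose that for every t ∈ [2^{−m/2} r, K^m α_1^{−m·2^m} r] and every i ∈ {1, …, n} we have s_t(μ_i) ≤ α_i. Then s_r(μ_1 * μ_2 * ⋯ * μ_n) ≤ C_{K,d}^{n−1} · α_1 α_2 ⋯ α_n. -/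

import Mathlib

open MeasureTheory Real

/-- Density of the centered Gaussian on `ℝ^d` with covariance matrix `y • I`. -/
noncomputable def gaussD (d : ℕ) (y : ℝ) (x : EuclideanSpace ℝ (Fin d)) : ℝ :=
  (2 * Real.pi * y) ^ (-(d : ℝ) / 2) * Real.exp (-‖x‖ ^ 2 / (2 * y))

/-- `∂/∂y n_y (x)`. -/
noncomputable def gaussDy (d : ℕ) (y : ℝ) (x : EuclideanSpace ℝ (Fin d)) : ℝ :=
  deriv (fun u => gaussD d u x) y

/-- The detail of a measure `μ` on `ℝ^d` around the scale `r`. -/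
noncomputable def detail (d : ℕ) (μ : Measure (EuclideanSpace ℝ (Fin d))) (r : ℝ) : ℝ :=
  r ^ 2 * (Real.Gamma ((d : ℝ) / 2) / 2) * ((d : ℝ) / (2 * Real.exp 1)) ^ (-(d : ℝ) / 2) *
    ∫ x, |∫ z, gaussDy d (r ^ 2) (x - z) ∂μ|

/-- The constant `C_{K,d} = (8/Γ(d/2)) (d/(2e))^{d/2} (1 + 1/(2K²))`. -/
noncomputable def CKd (K : ℝ) (d : ℕ) : ℝ :=
  8 / Real.Gamma ((d : ℝ) / 2) * ((d : ℝ) / (2 * Real.exp 1)) ^ ((d : ℝ) / 2) *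
    (1 + 1 / (2 * K ^ 2))

/-- The convolution of a finite list of measures (the empty convolution being `δ₀`). -/
noncomputable def convList {d : ℕ} : List (Measure (EuclideanSpace ℝ (Fin d))) →
    Measure (EuclideanSpace ℝ (Fin d))
  | [] => Measure.dirac 0
  | ν :: l => ν ∗ convList l

/-!
Differentiating `n_{a+b} = n_a * n_b` once in `a` and once in `b` shows that the second derivative
of `n_y` in `y` is `∂n_{y/2} * ∂n_{y/2}`, writing `∂n_y` for `∂n_y/∂y`. Hence the `y`-derivative of
`(μ * ν) * ∂n_y` is `(μ * ∂n_{y/2}) * (ν * ∂n_{y/2})`, and its `L¹` norm is, up to explicit factors,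
at most the product of the details of `μ` and `ν` at scale `√(y / 2)`. Integrating from `y = r²` to
a large `y = S` bounds the detail of `μ * ν` at scale `r` by a multiple of the product of the bounds
for `μ` and `ν`, plus a boundary term at scale `√(S / 2)` which is absorbed in the constant once `S`
is large. The bound for `n` measures follows by splitting the convolution in two about `log₂ n`
times.
-/

lemma eLpNorm_one_integral_le {X Y E : Type*} [MeasurableSpace X] [MeasurableSpace Y]
    [NormedAddCommGroup E] [NormedSpace ℝ E] {μ : Measure X} {ν : Measure Y} [SFinite μ] [SFinite ν]
    {F : X → Y → E} (hF : AEStronglyMeasurable (Function.uncurry F) (μ.prod ν)) :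
    eLpNorm (fun x => ∫ y, F x y ∂ν) 1 μ ≤ ∫⁻ y, eLpNorm (fun x => F x y) 1 μ ∂ν := by
  simp only [eLpNorm_one_eq_lintegral_enorm]
  calc ∫⁻ x, ‖∫ y, F x y ∂ν‖ₑ ∂μ
      ≤ ∫⁻ x, ∫⁻ y, ‖F x y‖ₑ ∂ν ∂μ := by gcongr; exact enorm_integral_le_lintegral_enorm _
    _ = ∫⁻ y, ∫⁻ x, ‖F x y‖ₑ ∂μ ∂ν := lintegral_lintegral_swap hF.enorm

section MeasureConvolution

open scoped Convolution

variable {G : Type*} [AddCommGroup G] [MeasureSpace G] {μ ν : Measure G} {f g : G → ℝ} {M : ℝ}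

/-- The convolution `μ * f` of a measure with a function, so that `detail` is, up to a factor, the
`L¹` norm of `measConv μ (gaussDy d y)`. -/
noncomputable def measConv (μ : Measure G) (f : G → ℝ) (x : G) : ℝ := ∫ z, f (x - z) ∂μ

lemma abs_measConv_le [IsFiniteMeasure μ] (hf : ∀ x, |f x| ≤ M) (x : G) :
    |measConv μ f x| ≤ M * μ.real Set.univ :=
  norm_integral_le_of_norm_le_const (f := fun z => f (x - z)) (.of_forall fun _ => hf _)

lemma abs_convolution_le (hf : Integrable f) (hg : ∀ x, |g x| ≤ M) (x : G) :
    |(f ⋆ g) x| ≤ (∫ t, |f t|) * M := by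
  rw [convolution_lsmul, ← integral_mul_const]
  refine norm_integral_le_of_norm_le (f := fun t => f t • g (x - t)) (hf.abs.mul_const M)
    (.of_forall fun t => ?_)
  rw [norm_smul]
  exact mul_le_mul_of_nonneg_left (hg _) (abs_nonneg _)

variable [MeasurableAdd₂ G] [MeasurableNeg G]

lemma measurable_measConv [SFinite μ] (hf : Measurable f) : Measurable (measConv μ f) := by
  have : Measurable fun p : G × G => f (p.1 - p.2) := by fun_prop
  exact this.stronglyMeasurable.integral_prod_right.measurable

variable [SFinite (volume : Measure G)]

lemma measurable_convolution (hf : Measurable f) (hg : Measurable g) : Measurable (f ⋆ g) := by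
  have : Measurable fun p : G × G => f p.2 * g (p.1 - p.2) := by fun_prop
  exact this.stronglyMeasurable.integral_prod_right.measurable

variable [(volume : Measure G).IsAddLeftInvariant]

lemma integrable_prod_comp_sub [IsFiniteMeasure μ] (hf : Measurable f) (hfi : Integrable f) :
    Integrable (fun p : G × G => f (p.2 - p.1)) (μ.prod volume) := by
  rw [integrable_prod_iff (Measurable.aestronglyMeasurable (by fun_prop))]
  refine ⟨.of_forall fun z => hfi.comp_sub_right z, ?_⟩
  simp only [integral_sub_right_eq_self fun x => ‖f x‖]
  exact integrable_const _

lemma integrable_measConv [IsFiniteMeasure μ] (hf : Measurable f) (hfi : Integrable f) :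
    Integrable (measConv μ f) :=
  (integrable_prod_comp_sub hf hfi).integral_prod_right

lemma eLpNorm_one_measConv_le [SFinite μ] (hf : Measurable f) :
    eLpNorm (measConv μ f) 1 ≤ eLpNorm f 1 * μ Set.univ := by
  have hmeas : Measurable (Function.uncurry fun x z => f (x - z)) := by fun_prop
  refine (eLpNorm_one_integral_le hmeas.aestronglyMeasurable).trans_eq ?_
  simp only [eLpNorm_one_eq_lintegral_enorm, lintegral_sub_right_eq_self (‖f ·‖ₑ), lintegral_const]

lemma eLpNorm_one_convolution_le (hf : Measurable f) (hg : Measurable g) :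
    eLpNorm (f ⋆ g) 1 ≤ eLpNorm f 1 * eLpNorm g 1 := by
  have hmeas : Measurable (Function.uncurry fun x t => f t * g (x - t)) := by fun_prop
  refine (eLpNorm_one_integral_le hmeas.aestronglyMeasurable).trans_eq ?_
  have hinner (t : G) : ∫⁻ x, ‖f t * g (x - t)‖ₑ = ‖f t‖ₑ * ∫⁻ x, ‖g x‖ₑ := by
    simp only [enorm_mul]
    rw [lintegral_const_mul _ (by fun_prop), lintegral_sub_right_eq_self (‖g ·‖ₑ)]
  simp only [eLpNorm_one_eq_lintegral_enorm, hinner]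
  exact lintegral_mul_const _ hf.enorm

/- Fubini, after translating the variable of the inner convolution by the variable of `μ`:
`∫∫∫ f t g(x-w-v-t) dt dν(v) dμ(w) = ∫ (∫ f(t-w) dμ(w)) (∫ g(x-t-v) dν(v)) dt`. -/
lemma measConv_conv_convolution [IsFiniteMeasure μ] [IsFiniteMeasure ν] (hf : Measurable f)
    (hfi : Integrable f) (hg : Measurable g) (hgb : ∀ x, |g x| ≤ M) :
    measConv (μ ∗ ν) (f ⋆ g) = measConv μ f ⋆ measConv ν g := by
  ext x
  have hfg : Integrable (fun z => (f ⋆ g) (x - z)) (μ ∗ ν) :=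
    .of_bound ((measurable_convolution hf hg).comp (by fun_prop)).aestronglyMeasurable _
      (.of_forall fun z => abs_convolution_le hfi hgb (x - z))
  have htranslate (w v : G) : (f ⋆ g) (x - (w + v)) = ∫ t, f (t - w) * g (x - t - v) := by
    rw [convolution_lsmul, ← integral_sub_right_eq_self _ w]
    congr 1 with t
    rw [smul_eq_mul]
    congr 2
    abel
  have hinner (w : G) :
      ∫ v, (f ⋆ g) (x - (w + v)) ∂ν = ∫ t, f (t - w) * measConv ν g (x - t) := by
    simp only [htranslate]
    rw [integral_integral_swap]
    · simp only [integral_const_mul, measConv]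
    · exact ((hfi.comp_sub_right w).comp_snd ν).mul_bdd (c := M)
        (Measurable.aestronglyMeasurable (by fun_prop)) (.of_forall fun p => hgb _)
  calc measConv (μ ∗ ν) (f ⋆ g) x
      = ∫ w, (∫ t, f (t - w) * measConv ν g (x - t)) ∂μ := by
        rw [measConv, integral_conv hfg]
        simp only [hinner]
    _ = ∫ t, ∫ w, f (t - w) * measConv ν g (x - t) ∂μ := by
        have := measurable_measConv (μ := ν) hg
        refine integral_integral_swap ?_
        exact (integrable_prod_comp_sub hf hfi).mul_bdd
          (Measurable.aestronglyMeasurable (by fun_prop))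
          (.of_forall fun p => abs_measConv_le hgb (x - p.2))
    _ = (measConv μ f ⋆ measConv ν g) x := by
        simp only [integral_mul_const, convolution_lsmul, smul_eq_mul, measConv]

end MeasureConvolution

section Gaussian

open scoped Convolution Nat

variable {d : ℕ} {a b lo y : ℝ}

lemma hasDerivAt_gaussD (hy : 0 < y) (x : EuclideanSpace ℝ (Fin d)) :
    HasDerivAt (fun u => gaussD d u x) (gaussD d y x * ((‖x‖ ^ 2 / (2 * y) - d / 2) / y)) y := by
  unfold gaussD
  have hlin : HasDerivAt (fun u : ℝ => 2 * u) 2 y := by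
    simpa using (hasDerivAt_id y).const_mul (2 : ℝ)
  have hpow : HasDerivAt (fun u : ℝ => (2 * π * u) ^ (-(d : ℝ) / 2))
      (2 * π * (-(d : ℝ) / 2) * (2 * π * y) ^ (-(d : ℝ) / 2 - 1)) y := by
    simpa using ((hasDerivAt_id y).const_mul (2 * π)).rpow_const (p := -(d : ℝ) / 2)
      (Or.inl (mul_pos two_pi_pos hy).ne')
  have hexp := ((hasDerivAt_const y (-‖x‖ ^ 2)).div hlin (by positivity)).exp
  convert! hpow.mul hexp using 1
  rw [rpow_sub_one (by positivity)]
  simp only [Pi.div_apply]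
  field_simp
  ring

lemma gaussDy_eq (hy : 0 < y) (x : EuclideanSpace ℝ (Fin d)) :
    gaussDy d y x = gaussD d y x * ((‖x‖ ^ 2 / (2 * y) - d / 2) / y) :=
  (hasDerivAt_gaussD hy x).deriv

/-- The second derivative `∂²/∂y² n_y`, given by an explicit formula which makes it jointly
measurable in `y` and `x`; see `hasDerivAt_gaussDy`. -/
noncomputable def gaussDyy (d : ℕ) (y : ℝ) (x : EuclideanSpace ℝ (Fin d)) : ℝ :=
  gaussD d y x * (((‖x‖ ^ 2 / (2 * y) - d / 2) ^ 2 - 2 * (‖x‖ ^ 2 / (2 * y)) + d / 2) / y ^ 2)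

lemma hasDerivAt_gaussDy (hy : 0 < y) (x : EuclideanSpace ℝ (Fin d)) :
    HasDerivAt (fun u => gaussDy d u x) (gaussDyy d y x) y := by
  have hlin : HasDerivAt (fun u : ℝ => 2 * u) 2 y := by
    simpa using (hasDerivAt_id y).const_mul (2 : ℝ)
  have hfactor := (((hasDerivAt_const y (‖x‖ ^ 2)).div hlin (by positivity)).sub_const
    ((d : ℝ) / 2)).div (hasDerivAt_id y) hy.ne'
  have hformula : HasDerivAt (fun u => gaussD d u x * ((‖x‖ ^ 2 / (2 * u) - d / 2) / u))
      (gaussDyy d y x) y := by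
    convert! (hasDerivAt_gaussD hy x).mul hfactor using 1
    simp only [Pi.div_apply, gaussDyy, id]
    field_simp
    ring
  refine hformula.congr_of_eventuallyEq ?_
  filter_upwards [Ioi_mem_nhds hy] with u hu using gaussDy_eq hu x

lemma measurable_uncurry_gaussD : Measurable (Function.uncurry (gaussD d)) := by
  unfold gaussD Function.uncurry
  fun_prop

lemma measurable_gaussD : Measurable (gaussD d y) :=
  measurable_uncurry_gaussD.comp measurable_prodMk_left

lemma measurable_gaussDy (hy : 0 < y) : Measurable (gaussDy d y) := by
  have := measurable_gaussD (d := d) (y := y)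
  rw [funext (gaussDy_eq hy)]
  fun_prop

lemma measurable_uncurry_gaussDyy : Measurable (Function.uncurry (gaussDyy d)) :=
  measurable_uncurry_gaussD.mul (by fun_prop)

lemma gaussD_nonneg (hy : 0 ≤ y) (x : EuclideanSpace ℝ (Fin d)) : 0 ≤ gaussD d y x := by
  unfold gaussD
  positivity

lemma gaussD_le (hlo : 0 < lo) (hy : lo ≤ y) (x : EuclideanSpace ℝ (Fin d)) :
    gaussD d y x ≤ (2 * π * lo) ^ (-(d : ℝ) / 2) := by
  have hexp : exp (-‖x‖ ^ 2 / (2 * y)) ≤ 1 := by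
    rw [exp_le_one_iff, neg_div, neg_nonpos]
    have := hlo.trans_le hy
    positivity
  have hpow : (2 * π * y) ^ (-(d : ℝ) / 2) ≤ (2 * π * lo) ^ (-(d : ℝ) / 2) :=
    rpow_le_rpow_of_nonpos (by positivity) (by gcongr) (by rw [neg_div, neg_nonpos]; positivity)
  exact (mul_le_mul hpow hexp (exp_nonneg _) (by positivity)).trans_eq (mul_one _)

lemma norm_gaussD_le (hlo : 0 < lo) (hy : lo ≤ y) (x : EuclideanSpace ℝ (Fin d)) :
    ‖gaussD d y x‖ ≤ (2 * π * lo) ^ (-(d : ℝ) / 2) := by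
  rw [norm_of_nonneg (gaussD_nonneg (hlo.le.trans hy) x)]
  exact gaussD_le hlo hy x

lemma gaussD_eq_exp_mul_gaussD_two_mul (hy : 0 ≤ y) (x : EuclideanSpace ℝ (Fin d)) :
    gaussD d y x =
      2 ^ ((d : ℝ) / 2) * exp (-(‖x‖ ^ 2 / (4 * y))) * gaussD d (2 * y) x := by
  have hpow : (2 * π * y) ^ (-(d : ℝ) / 2) =
      2 ^ ((d : ℝ) / 2) * (2 * π * (2 * y)) ^ (-(d : ℝ) / 2) := by
    rw [show 2 * π * (2 * y) = 2 * (2 * π * y) by ring, mul_rpow zero_le_two (by positivity),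
      ← mul_assoc, ← rpow_add zero_lt_two, neg_div, add_neg_cancel, rpow_zero, one_mul]
  have hexp : exp (-‖x‖ ^ 2 / (2 * y)) =
      exp (-(‖x‖ ^ 2 / (4 * y))) * exp (-‖x‖ ^ 2 / (2 * (2 * y))) := by
    rw [← exp_add]
    congr 1
    ring
  rw [gaussD, gaussD, hpow, hexp]
  ring

lemma pow_mul_exp_neg_le_factorial {p : ℝ} (hp : 0 ≤ p) (n : ℕ) : p ^ n * exp (-p) ≤ n ! := by
  have := pow_div_factorial_le_exp p hp n
  rw [div_le_iff₀ (by positivity)] at this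
  rwa [exp_neg, ← div_eq_mul_inv, div_le_iff₀' (exp_pos p)]

lemma abs_gaussD_mul_le {q C : ℝ} (hy : 0 < y) (x : EuclideanSpace ℝ (Fin d))
    (hq : exp (-(‖x‖ ^ 2 / (4 * y))) * |q| ≤ C) :
    |gaussD d y x * q| ≤ 2 ^ ((d : ℝ) / 2) * C * gaussD d (2 * y) x := by
  have hg := gaussD_nonneg (by positivity : 0 ≤ 2 * y) x
  rw [abs_mul, abs_of_nonneg (gaussD_nonneg hy.le x), gaussD_eq_exp_mul_gaussD_two_mul hy.le]
  calc 2 ^ ((d : ℝ) / 2) * exp (-(‖x‖ ^ 2 / (4 * y))) * gaussD d (2 * y) x * |q|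
      = 2 ^ ((d : ℝ) / 2) * (exp (-(‖x‖ ^ 2 / (4 * y))) * |q|) * gaussD d (2 * y) x := by ring
    _ ≤ 2 ^ ((d : ℝ) / 2) * C * gaussD d (2 * y) x := by gcongr

lemma abs_gaussDy_le (hy : 0 < y) (x : EuclideanSpace ℝ (Fin d)) :
    |gaussDy d y x| ≤ 2 ^ ((d : ℝ) / 2) * ((2 + d / 2) / y) * gaussD d (2 * y) x := by
  rw [gaussDy_eq hy]
  refine abs_gaussD_mul_le hy x ?_
  set p := ‖x‖ ^ 2 / (4 * y) with hp
  have hp0 : 0 ≤ p := by positivity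
  have hpoly : |2 * p - d / 2| ≤ 2 * p + d / 2 := by
    simpa only [abs_of_nonneg (by positivity : 0 ≤ 2 * p), Nat.abs_cast, abs_div, Nat.abs_ofNat]
      using abs_sub (2 * p) (d / 2 : ℝ)
  have hbound : exp (-p) * |2 * p - d / 2| ≤ 2 + d / 2 :=
    calc exp (-p) * |2 * p - d / 2|
        ≤ exp (-p) * (2 * p + d / 2) := by gcongr
      _ = 2 * (p ^ 1 * exp (-p)) + d / 2 * (p ^ 0 * exp (-p)) := by ring
      _ ≤ 2 * (1 ! : ℕ) + d / 2 * (0 ! : ℕ) := by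
        gcongr <;> exact pow_mul_exp_neg_le_factorial hp0 _
      _ = 2 + d / 2 := by simp
  rw [show ‖x‖ ^ 2 / (2 * y) = 2 * p by rw [hp]; ring, abs_div, abs_of_pos hy, ← mul_div_assoc]
  gcongr

lemma abs_gaussDyy_le (hy : 0 < y) (x : EuclideanSpace ℝ (Fin d)) :
    |gaussDyy d y x| ≤
      2 ^ ((d : ℝ) / 2) * ((12 + 5 * d / 2 + d ^ 2 / 4) / y ^ 2) * gaussD d (2 * y) x := by
  refine abs_gaussD_mul_le hy x ?_
  set p := ‖x‖ ^ 2 / (4 * y) with hp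
  have hp0 : 0 ≤ p := by positivity
  rw [show ‖x‖ ^ 2 / (2 * y) = 2 * p by rw [hp]; ring]
  set q := (2 * p - d / 2) ^ 2 - 2 * (2 * p) + d / 2 with hq
  have hpoly : |q| ≤ 4 * p ^ 2 + (4 + 2 * d) * p + (d / 2 + d ^ 2 / 4) := by
    rw [abs_le, hq]
    constructor <;> nlinarith [sq_nonneg (2 * p - d / 2), mul_nonneg hp0 (Nat.cast_nonneg' d),
      (Nat.cast_nonneg' d : (0 : ℝ) ≤ d)]
  have hbound : exp (-p) * |q| ≤ 12 + 5 * d / 2 + d ^ 2 / 4 :=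
    calc exp (-p) * |q|
        ≤ exp (-p) * (4 * p ^ 2 + (4 + 2 * d) * p + (d / 2 + d ^ 2 / 4)) := by gcongr
      _ = 4 * (p ^ 2 * exp (-p)) + (4 + 2 * d) * (p ^ 1 * exp (-p)) +
            (d / 2 + d ^ 2 / 4) * (p ^ 0 * exp (-p)) := by ring
      _ ≤ 4 * (2 ! : ℕ) + (4 + 2 * d) * (1 ! : ℕ) + (d / 2 + d ^ 2 / 4) * (0 ! : ℕ) := by
        gcongr <;> exact pow_mul_exp_neg_le_factorial hp0 _
      _ = 12 + 5 * d / 2 + d ^ 2 / 4 := by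
        simp only [Nat.factorial]
        push_cast
        ring
  rw [abs_div, abs_sq, ← mul_div_assoc]
  gcongr

lemma exists_abs_gaussDy_le (d : ℕ) (hlo : 0 < lo) :
    ∃ M, ∀ y, lo ≤ y → ∀ x, |gaussDy d y x| ≤ M := by
  refine ⟨2 ^ ((d : ℝ) / 2) * ((2 + d / 2) / lo) * (2 * π * (2 * lo)) ^ (-(d : ℝ) / 2),
    fun y hy x => (abs_gaussDy_le (hlo.trans_le hy) x).trans ?_⟩
  have hy0 := hlo.trans_le hy
  have := gaussD_nonneg (by positivity : 0 ≤ 2 * y) x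
  gcongr
  exact gaussD_le (by positivity) (by gcongr) x

lemma exists_abs_gaussDyy_le (d : ℕ) (hlo : 0 < lo) :
    ∃ M, ∀ y, lo ≤ y → ∀ x, |gaussDyy d y x| ≤ M := by
  refine ⟨2 ^ ((d : ℝ) / 2) * ((12 + 5 * d / 2 + d ^ 2 / 4) / lo ^ 2) *
    (2 * π * (2 * lo)) ^ (-(d : ℝ) / 2),
    fun y hy x => (abs_gaussDyy_le (hlo.trans_le hy) x).trans ?_⟩
  have hy0 := hlo.trans_le hy
  have := gaussD_nonneg (by positivity : 0 ≤ 2 * y) x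
  gcongr
  exact gaussD_le (by positivity) (by gcongr) x

lemma gaussD_eq_rexp_neg_mul_sq (y : ℝ) : gaussD d y = fun x =>
    (2 * π * y) ^ (-(d : ℝ) / 2) * rexp (-(1 / (2 * y)) * ‖x‖ ^ 2) := by
  ext x
  rw [gaussD]
  congr 2
  ring

lemma integral_gaussD (hy : 0 < y) : ∫ x, gaussD d y x = 1 := by
  rw [gaussD_eq_rexp_neg_mul_sq, integral_const_mul,
    GaussianFourier.integral_rexp_neg_mul_sq_norm (by positivity),
    show π / (1 / (2 * y)) = 2 * π * y by field_simp, finrank_euclideanSpace, Fintype.card_fin,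
    ← rpow_add (by positivity), neg_div, neg_add_cancel, rpow_zero]

lemma integrable_gaussD (hy : 0 < y) : Integrable (gaussD d y) :=
  .of_integral_ne_zero (by rw [integral_gaussD hy]; exact one_ne_zero)

lemma eLpNorm_one_gaussD (hy : 0 < y) : eLpNorm (gaussD d y) 1 = 1 := by
  rw [eLpNorm_one_eq_lintegral_enorm, ← ofReal_integral_norm_eq_lintegral_enorm
    (integrable_gaussD hy)]
  simp only [norm_of_nonneg (gaussD_nonneg hy.le _), integral_gaussD hy, ENNReal.ofReal_one]

lemma integrable_gaussDy (hy : 0 < y) : Integrable (gaussDy d y) :=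
  ((integrable_gaussD (by positivity)).const_mul _).mono'
    (measurable_gaussDy hy).aestronglyMeasurable (.of_forall (abs_gaussDy_le hy))

lemma gaussD_mul_gaussD_sub (ha : 0 < a) (hb : 0 < b) (x t : EuclideanSpace ℝ (Fin d)) :
    gaussD d a t * gaussD d b (x - t) =
      gaussD d (a + b) x * gaussD d (a * b / (a + b)) (t - (a / (a + b)) • x) := by
  have hexponent : -‖t‖ ^ 2 / (2 * a) + -‖x - t‖ ^ 2 / (2 * b) = -‖x‖ ^ 2 / (2 * (a + b)) +
      -‖t - (a / (a + b)) • x‖ ^ 2 / (2 * (a * b / (a + b))) := by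
    rw [norm_sub_sq_real, norm_sub_sq_real, real_inner_smul_right, norm_smul, real_inner_comm,
      mul_pow, norm_eq_abs, sq_abs]
    field_simp
    ring
  have hfactor : (2 * π * a) ^ (-(d : ℝ) / 2) * (2 * π * b) ^ (-(d : ℝ) / 2) =
      (2 * π * (a + b)) ^ (-(d : ℝ) / 2) * (2 * π * (a * b / (a + b))) ^ (-(d : ℝ) / 2) := by
    rw [← mul_rpow (by positivity) (by positivity), ← mul_rpow (by positivity) (by positivity)]
    congr 1
    field_simp
  simp only [gaussD]
  rw [mul_mul_mul_comm, ← exp_add, hexponent, hfactor, exp_add, mul_mul_mul_comm]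

lemma gaussD_convolution_gaussD (ha : 0 < a) (hb : 0 < b) :
    gaussD d a ⋆ gaussD d b = gaussD d (a + b) := by
  ext x
  simp only [convolution_lsmul, smul_eq_mul, gaussD_mul_gaussD_sub ha hb]
  rw [integral_const_mul, integral_sub_right_eq_self (gaussD d (a * b / (a + b))),
    integral_gaussD (by positivity), mul_one]

lemma hasDerivAt_gaussD_convolution {f : EuclideanSpace ℝ (Fin d) → ℝ} (ha : 0 < a)
    (hf : Integrable f) (x : EuclideanSpace ℝ (Fin d)) :
    HasDerivAt (fun u => (gaussD d u ⋆ f) x) ((gaussDy d a ⋆ f) x) a := by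
  have hfx : Integrable fun t => f (x - t) := hf.comp_sub_left x
  obtain ⟨M, hM⟩ := exists_abs_gaussDy_le d (half_pos ha)
  simp only [convolution_lsmul, smul_eq_mul]
  refine (hasDerivAt_integral_of_dominated_loc_of_deriv_le (𝕜 := ℝ)
    (F := fun u t => gaussD d u t * f (x - t)) (F' := fun u t => gaussDy d u t * f (x - t))
    (bound := fun t => M * ‖f (x - t)‖) (Ioi_mem_nhds (half_lt_self ha)) ?_ ?_ ?_ ?_
    (hfx.norm.const_mul M) ?_).2
  · exact .of_forall fun u => measurable_gaussD.aestronglyMeasurable.mul hfx.1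
  · exact hfx.bdd_mul measurable_gaussD.aestronglyMeasurable
      (.of_forall fun t => norm_gaussD_le ha le_rfl t)
  · exact (measurable_gaussDy ha).aestronglyMeasurable.mul hfx.1
  · refine .of_forall fun t u hu => ?_
    rw [norm_mul]
    exact mul_le_mul_of_nonneg_right (hM u (le_of_lt hu) t) (norm_nonneg _)
  · refine .of_forall fun t u hu => ?_
    have hderiv := hasDerivAt_gaussD ((half_pos ha).trans hu) t
    rw [← gaussDy_eq ((half_pos ha).trans hu)] at hderiv
    exact hderiv.mul_const _

lemma gaussDy_convolution_gaussD (ha : 0 < a) (hb : 0 < b) :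
    gaussDy d a ⋆ gaussD d b = gaussDy d (a + b) := by
  ext x
  have hderiv : HasDerivAt (fun u => gaussD d (u + b) x) (gaussDy d (a + b) x) a := by
    rw [gaussDy_eq (by positivity)]
    exact (hasDerivAt_gaussD (by positivity) x).comp_add_const a b
  refine (hasDerivAt_gaussD_convolution ha (integrable_gaussD hb) x).unique
    (hderiv.congr_of_eventuallyEq ?_)
  filter_upwards [Ioi_mem_nhds ha] with u hu
  rw [gaussD_convolution_gaussD hu hb]

lemma gaussD_convolution_gaussDy (ha : 0 < a) (hb : 0 < b) :
    gaussD d a ⋆ gaussDy d b = gaussDy d (a + b) := by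
  rw [add_comm, ← gaussDy_convolution_gaussD hb ha]
  ext x
  rw [convolution_lsmul, convolution_lsmul_swap]
  simp only [smul_eq_mul, mul_comm]

lemma gaussDy_convolution_gaussDy (ha : 0 < a) (hb : 0 < b) :
    gaussDy d a ⋆ gaussDy d b = gaussDyy d (a + b) := by
  ext x
  have hderiv : HasDerivAt (fun u => gaussDy d (u + b) x) (gaussDyy d (a + b) x) a :=
    (hasDerivAt_gaussDy (by positivity) x).comp_add_const a b
  refine (hasDerivAt_gaussD_convolution ha (integrable_gaussDy hb) x).unique
    (hderiv.congr_of_eventuallyEq ?_)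
  filter_upwards [Ioi_mem_nhds ha] with u hu
  rw [gaussD_convolution_gaussDy hu hb]

end Gaussian

section HeatFlow

open scoped Convolution

variable {d : ℕ} {μ ν : Measure (EuclideanSpace ℝ (Fin d))} [IsFiniteMeasure μ] {a b s S : ℝ}

lemma integral_gaussDyy (hs : 0 < s) (hsS : s ≤ S) (x : EuclideanSpace ℝ (Fin d)) :
    ∫ y in s..S, gaussDyy d y x = gaussDy d S x - gaussDy d s x := by
  refine intervalIntegral.integral_eq_sub_of_hasDerivAt (fun y hy => ?_) ?_
  · rw [Set.uIcc_of_le hsS] at hy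
    exact hasDerivAt_gaussDy (hs.trans_le hy.1) x
  · obtain ⟨M, hM⟩ := exists_abs_gaussDyy_le d hs
    have hmeas : Measurable fun y => gaussDyy d y x :=
      measurable_uncurry_gaussDyy.comp measurable_prodMk_right
    rw [intervalIntegrable_iff_integrableOn_Ioc_of_le hsS]
    exact .of_bound measure_Ioc_lt_top hmeas.aestronglyMeasurable M
      (ae_restrict_of_forall_mem measurableSet_Ioc fun y hy => hM y hy.1.le x)

lemma measConv_gaussDy_sub (hs : 0 < s) (hsS : s ≤ S) (x : EuclideanSpace ℝ (Fin d)) :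
    measConv μ (gaussDy d S) x - measConv μ (gaussDy d s) x =
      ∫ y in s..S, measConv μ (gaussDyy d y) x := by
  have hslice {y : ℝ} (hy : 0 < y) : Integrable (fun z => gaussDy d y (x - z)) μ := by
    obtain ⟨M, hM⟩ := exists_abs_gaussDy_le d hy
    exact .of_bound ((measurable_gaussDy hy).comp (by fun_prop)).aestronglyMeasurable M
      (.of_forall fun z => hM y le_rfl (x - z))
  have hprod : Integrable (fun p : ℝ × EuclideanSpace ℝ (Fin d) => gaussDyy d p.1 (x - p.2))
      ((volume.restrict (Set.uIoc s S)).prod μ) := by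
    obtain ⟨M, hM⟩ := exists_abs_gaussDyy_le d hs
    have hmeas : Measurable fun p : ℝ × EuclideanSpace ℝ (Fin d) => gaussDyy d p.1 (x - p.2) :=
      measurable_uncurry_gaussDyy.comp (by fun_prop : Measurable
        fun p : ℝ × EuclideanSpace ℝ (Fin d) => (p.1, x - p.2))
    have hrange : ∀ᵐ p ∂((volume.restrict (Set.Ioc s S)).prod μ), p.1 ∈ Set.Ioc s S :=
      Measure.quasiMeasurePreserving_fst.ae (ae_restrict_mem measurableSet_Ioc)
    rw [Set.uIoc_of_le hsS]
    refine .of_bound hmeas.aestronglyMeasurable M ?_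
    filter_upwards [hrange] with p hp using hM _ hp.1.le _
  simp only [measConv]
  rw [← integral_sub (hslice (hs.trans_le hsS)) (hslice hs), intervalIntegral_integral_swap hprod]
  simp only [integral_gaussDyy hs hsS]

lemma eLpNorm_one_measConv_gaussDy_le_add (hs : 0 < s) (hsS : s ≤ S) :
    eLpNorm (measConv μ (gaussDy d s)) 1 ≤ eLpNorm (measConv μ (gaussDy d S)) 1 +
      ∫⁻ y in Set.Ioc s S, eLpNorm (measConv μ (gaussDyy d y)) 1 := by
  have hmeas {y : ℝ} (hy : 0 < y) :
      AEStronglyMeasurable (measConv μ (gaussDy d y)) volume :=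
    (measurable_measConv (measurable_gaussDy hy)).aestronglyMeasurable
  have hmeas_prod : Measurable (Function.uncurry fun x y => measConv μ (gaussDyy d y) x) := by
    have : Measurable fun p : (EuclideanSpace ℝ (Fin d) × ℝ) × EuclideanSpace ℝ (Fin d) =>
        gaussDyy d p.1.2 (p.1.1 - p.2) :=
      measurable_uncurry_gaussDyy.comp (by fun_prop : Measurable
        fun p : (EuclideanSpace ℝ (Fin d) × ℝ) × EuclideanSpace ℝ (Fin d) =>
          (p.1.2, p.1.1 - p.2))
    exact this.stronglyMeasurable.integral_prod_right.measurable
  have hrepr : measConv μ (gaussDy d s) = measConv μ (gaussDy d S) -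
      fun x => ∫ y in Set.Ioc s S, measConv μ (gaussDyy d y) x := by
    ext x
    rw [Pi.sub_apply, ← intervalIntegral.integral_of_le hsS, ← measConv_gaussDy_sub hs hsS,
      sub_sub_cancel]
  rw [hrepr]
  refine (eLpNorm_sub_le (hmeas (hs.trans_le hsS)) ?_ le_rfl).trans ?_
  · exact hmeas_prod.stronglyMeasurable.integral_prod_right.aestronglyMeasurable
  · gcongr
    exact eLpNorm_one_integral_le hmeas_prod.aestronglyMeasurable

variable [IsFiniteMeasure ν]

lemma eLpNorm_one_measConv_conv_gaussDy_le (ha : 0 < a) (hb : 0 < b) :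
    eLpNorm (measConv (μ ∗ ν) (gaussDy d (a + b))) 1 ≤
      eLpNorm (measConv μ (gaussDy d a)) 1 * ν Set.univ := by
  have hma := measurable_measConv (μ := μ) (measurable_gaussDy (d := d) ha)
  have hmb := measurable_measConv (μ := ν) (measurable_gaussD (d := d) (y := b))
  rw [← gaussDy_convolution_gaussD ha hb, measConv_conv_convolution (measurable_gaussDy ha)
    (integrable_gaussDy ha) measurable_gaussD (norm_gaussD_le hb le_rfl)]
  refine (eLpNorm_one_convolution_le hma hmb).trans ?_
  gcongr
  simpa only [eLpNorm_one_gaussD hb, one_mul] using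
    eLpNorm_one_measConv_le (μ := ν) (measurable_gaussD (d := d) (y := b))

lemma eLpNorm_one_measConv_conv_gaussDyy_le (ha : 0 < a) (hb : 0 < b) :
    eLpNorm (measConv (μ ∗ ν) (gaussDyy d (a + b))) 1 ≤
      eLpNorm (measConv μ (gaussDy d a)) 1 * eLpNorm (measConv ν (gaussDy d b)) 1 := by
  obtain ⟨M, hM⟩ := exists_abs_gaussDy_le d hb
  rw [← gaussDy_convolution_gaussDy ha hb, measConv_conv_convolution (measurable_gaussDy ha)
    (integrable_gaussDy ha) (measurable_gaussDy hb) (hM b le_rfl)]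
  exact eLpNorm_one_convolution_le (measurable_measConv (measurable_gaussDy ha))
    (measurable_measConv (measurable_gaussDy hb))

lemma eLpNorm_one_measConv_conv_gaussDy_le_add_lintegral (hs : 0 < s) (hsS : s ≤ S) :
    eLpNorm (measConv (μ ∗ ν) (gaussDy d s)) 1 ≤
      eLpNorm (measConv μ (gaussDy d (S / 2))) 1 * ν Set.univ +
        ∫⁻ y in Set.Ioc s S, eLpNorm (measConv μ (gaussDy d (y / 2))) 1 *
          eLpNorm (measConv ν (gaussDy d (y / 2))) 1 := by
  refine (eLpNorm_one_measConv_gaussDy_le_add hs hsS).trans (add_le_add ?_ ?_)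
  · have hS := half_pos (hs.trans_le hsS)
    simpa only [add_halves] using eLpNorm_one_measConv_conv_gaussDy_le hS hS
  · refine setLIntegral_mono' measurableSet_Ioc fun y hy => ?_
    have hy := half_pos (hs.trans hy.1)
    simpa only [add_halves] using eLpNorm_one_measConv_conv_gaussDyy_le hy hy

end HeatFlow

section Constants

variable {d : ℕ} {K x : ℝ}

lemma mul_div_exp_one_rpow_self_le (hx : 0 < x) :
    x * (x / exp 1) ^ x ≤ ((x + 1) / exp 1) ^ (x + 1) := by
  have hratio : (x / (x + 1)) ^ (x + 1) ≤ exp (-1) :=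
    calc (x / (x + 1)) ^ (x + 1) ≤ exp (-(x + 1)⁻¹) ^ (x + 1) := by
          gcongr
          convert! add_one_le_exp (-(x + 1)⁻¹) using 1
          field_simp
          ring
      _ = exp (-1) := by
          rw [← exp_mul]
          congr 1
          field_simp
  calc x * (x / exp 1) ^ x = exp 1 * (x / exp 1) ^ (x + 1) := by
        rw [rpow_add_one (by positivity)]
        field_simp
    _ = exp 1 * (x / (x + 1)) ^ (x + 1) * ((x + 1) / exp 1) ^ (x + 1) := by
        rw [mul_assoc, ← mul_rpow (by positivity) (by positivity)]
        congr 2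
        field_simp
    _ ≤ exp 1 * exp (-1) * ((x + 1) / exp 1) ^ (x + 1) := by gcongr
    _ = ((x + 1) / exp 1) ^ (x + 1) := by rw [← exp_add, add_neg_cancel, exp_zero, one_mul]

lemma Gamma_half_le (hd : 0 < d) :
    Gamma ((d : ℝ) / 2) ≤ 5 * ((d : ℝ) / (2 * exp 1)) ^ ((d : ℝ) / 2) := by
  have he := exp_one_lt_d9
  obtain ⟨n, rfl⟩ := Nat.exists_eq_succ_of_ne_zero hd.ne'
  clear hd
  simp only [Nat.succ_eq_add_one, ← div_div]
  induction n using Nat.twoStepInduction with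
  | zero =>
    rw [zero_add, Nat.cast_one, Gamma_one_half_eq, ← sqrt_eq_rpow, sqrt_le_iff, mul_pow,
      sq_sqrt (by positivity), ← mul_div_assoc, le_div_iff₀ (exp_pos 1)]
    exact ⟨by positivity, by nlinarith [pi_lt_d2, pi_pos]⟩
  | one =>
    norm_num
    rw [← div_eq_mul_inv, le_div_iff₀ (exp_pos 1)]
    linarith
  | more n ih _ =>
    have hhalf : ((n + 2 + 1 : ℕ) : ℝ) / 2 = ((n + 1 : ℕ) : ℝ) / 2 + 1 := by
      push_cast
      ring
    have hx : (0 : ℝ) < ((n + 1 : ℕ) : ℝ) / 2 := by positivity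
    rw [hhalf, Gamma_add_one hx.ne']
    generalize ((n + 1 : ℕ) : ℝ) / 2 = x at hx ih
    calc x * Gamma x ≤ x * (5 * (x / exp 1) ^ x) := by gcongr
      _ = 5 * (x * (x / exp 1) ^ x) := mul_left_comm _ _ _
      _ ≤ 5 * ((x + 1) / exp 1) ^ (x + 1) := by
        gcongr
        exact mul_div_exp_one_rpow_self_le hx

/-- The dimensional factor `(Γ(d/2)/2) (d/(2e))^{-d/2}` in the definition of the detail. -/
noncomputable def detailConst (d : ℕ) : ℝ :=
  Gamma ((d : ℝ) / 2) / 2 * ((d : ℝ) / (2 * exp 1)) ^ (-(d : ℝ) / 2)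

lemma detailConst_pos (hd : 0 < d) : 0 < detailConst d := by
  have := Gamma_pos_of_pos (by positivity : 0 < (d : ℝ) / 2)
  unfold detailConst
  positivity

lemma detailConst_le (hd : 0 < d) : detailConst d ≤ 5 / 2 := by
  have hpow : 0 < ((d : ℝ) / (2 * exp 1)) ^ ((d : ℝ) / 2) := by positivity
  rw [detailConst, neg_div, rpow_neg (by positivity), ← div_eq_mul_inv, div_le_iff₀ hpow]
  linarith [Gamma_half_le hd]

lemma CKd_eq (K : ℝ) (d : ℕ) :
    CKd K d = 4 / detailConst d * (1 + 1 / (2 * K ^ 2)) := by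
  rw [CKd, detailConst, neg_div, rpow_neg (by positivity)]
  simp only [div_eq_mul_inv, mul_inv, inv_inv]
  ring

lemma CKd_zero (K : ℝ) : CKd K 0 = 0 := by simp [CKd, Gamma_zero]

lemma four_div_detailConst_le_CKd (hd : 0 < d) : 4 / detailConst d ≤ CKd K d := by
  have := detailConst_pos hd
  rw [CKd_eq]
  exact le_mul_of_one_le_right (by positivity) (le_add_of_nonneg_right (by positivity))

lemma one_le_CKd (hd : 0 < d) : 1 ≤ CKd K d := by
  refine le_trans ?_ (four_div_detailConst_le_CKd hd)
  rw [one_le_div (detailConst_pos hd)]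
  linarith [detailConst_le hd]

end Constants

section Detail

variable {d : ℕ} {μ ν : Measure (EuclideanSpace ℝ (Fin d))} [IsFiniteMeasure μ]
  {K r s t y α β T : ℝ}

lemma eLpNorm_one_measConv_gaussDy (hd : 0 < d) (ht : 0 < t) :
    eLpNorm (measConv μ (gaussDy d (t ^ 2))) 1 =
      ENNReal.ofReal (detail d μ t / (t ^ 2 * detailConst d)) := by
  have hc := detailConst_pos hd
  have ht2 := pow_pos ht 2
  have hdetail : detail d μ t =
      t ^ 2 * detailConst d * ∫ x, ‖measConv μ (gaussDy d (t ^ 2)) x‖ := by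
    simp only [detail, detailConst, measConv, norm_eq_abs]
    ring
  rw [eLpNorm_one_eq_lintegral_enorm, hdetail, mul_div_cancel_left₀ _ (by positivity),
    ofReal_integral_norm_eq_lintegral_enorm
      (integrable_measConv (measurable_gaussDy ht2) (integrable_gaussDy ht2))]

lemma eLpNorm_one_measConv_gaussDy_le (hd : 0 < d) (hy : 0 < y) (h : detail d μ √y ≤ α) :
    eLpNorm (measConv μ (gaussDy d y)) 1 ≤ ENNReal.ofReal (α / (y * detailConst d)) := by
  have hc := detailConst_pos hd
  have heq := eLpNorm_one_measConv_gaussDy (μ := μ) hd (sqrt_pos.2 hy)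
  rw [sq_sqrt hy.le] at heq
  rw [heq]
  gcongr

lemma lintegral_Ioi_inv_sq (hs : 0 < s) :
    ∫⁻ y in Set.Ioi s, ENNReal.ofReal (y ^ 2)⁻¹ = ENNReal.ofReal s⁻¹ := by
  have hrpow (y : ℝ) (hy : y ∈ Set.Ioi s) : (y ^ 2)⁻¹ = y ^ (-2 : ℝ) := by
    rw [rpow_neg (hs.trans hy).le, rpow_two]
  rw [setLIntegral_congr_fun measurableSet_Ioi fun y hy => by rw [hrpow y hy],
    ← ofReal_integral_eq_lintegral_ofReal (integrableOn_Ioi_rpow_of_lt (by norm_num) hs)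
      (ae_restrict_of_forall_mem measurableSet_Ioi fun y hy => rpow_nonneg (hs.trans hy).le _),
    integral_Ioi_rpow_of_lt (by norm_num) hs]
  norm_num [rpow_neg_one]

lemma lintegral_eLpNorm_mul_eLpNorm_le [IsFiniteMeasure ν] (hd : 0 < d) (hα : 0 ≤ α)
    (hβ : 0 ≤ β) (hs : 0 < s) (S : ℝ)
    (hμ : ∀ y ∈ Set.Ioc s S, detail d μ √(y / 2) ≤ α)
    (hν : ∀ y ∈ Set.Ioc s S, detail d ν √(y / 2) ≤ β) :
    ∫⁻ y in Set.Ioc s S, eLpNorm (measConv μ (gaussDy d (y / 2))) 1 *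
        eLpNorm (measConv ν (gaussDy d (y / 2))) 1 ≤
      ENNReal.ofReal (4 * α * β / (detailConst d ^ 2 * s)) := by
  have hc := detailConst_pos hd
  have hpointwise (y : ℝ) (hy : y ∈ Set.Ioc s S) :
      eLpNorm (measConv μ (gaussDy d (y / 2))) 1 * eLpNorm (measConv ν (gaussDy d (y / 2))) 1 ≤
        ENNReal.ofReal (4 * α * β / detailConst d ^ 2) * ENNReal.ofReal (y ^ 2)⁻¹ := by
    have hy0 := half_pos (hs.trans hy.1)
    refine (mul_le_mul' (eLpNorm_one_measConv_gaussDy_le hd hy0 (hμ y hy))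
      (eLpNorm_one_measConv_gaussDy_le hd hy0 (hν y hy))).trans_eq ?_
    rw [← ENNReal.ofReal_mul (by positivity), ← ENNReal.ofReal_mul (by positivity)]
    congr 1
    field_simp
    ring
  refine (setLIntegral_mono' measurableSet_Ioc hpointwise).trans
    ((lintegral_mono_set Set.Ioc_subset_Ioi_self).trans_eq ?_)
  rw [lintegral_const_mul _ (by fun_prop), lintegral_Ioi_inv_sq hs,
    ← ENNReal.ofReal_mul (by positivity), ← div_eq_mul_inv, div_div]

variable [IsProbabilityMeasure ν]

lemma detail_conv_le (hd : 0 < d) (hα : 0 ≤ α) (hβ : 0 ≤ β) (hr : 0 < r) (hT : 1 ≤ T)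
    (hμ : ∀ t ∈ Set.Icc (r / √2) (T * r), detail d μ t ≤ α)
    (hν : ∀ t ∈ Set.Icc (r / √2) (T * r), detail d ν t ≤ β) :
    detail d (μ ∗ ν) r ≤ 4 / detailConst d * α * β + α / T ^ 2 := by
  have hc := detailConst_pos hd
  have hsS : r ^ 2 ≤ 2 * (T * r) ^ 2 := by
    have hle := pow_le_pow_left₀ hr.le (le_mul_of_one_le_left hr.le hT) 2
    linarith [sq_nonneg r]
  have hmem {y : ℝ} (hy : y ∈ Set.Icc (r ^ 2) (2 * (T * r) ^ 2)) :
      √(y / 2) ∈ Set.Icc (r / √2) (T * r) := by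
    rw [Set.mem_Icc, sqrt_le_iff, le_sqrt' (by positivity), div_pow, sq_sqrt zero_le_two]
    exact ⟨by linarith [hy.1], by positivity, by linarith [hy.2]⟩
  have hlarge : eLpNorm (measConv μ (gaussDy d (2 * (T * r) ^ 2 / 2))) 1 ≤
      ENNReal.ofReal (α / ((T * r) ^ 2 * detailConst d)) := by
    rw [mul_div_cancel_left₀ _ two_ne_zero]
    refine eLpNorm_one_measConv_gaussDy_le hd (by positivity) (hμ _ ?_)
    simpa using hmem (Set.right_mem_Icc.2 hsS)
  have hsum := eLpNorm_one_measConv_conv_gaussDy_le_add_lintegral (μ := μ) (ν := ν)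
    (pow_pos hr 2) hsS
  rw [measure_univ, mul_one, eLpNorm_one_measConv_gaussDy hd hr] at hsum
  replace hsum := hsum.trans (add_le_add hlarge (lintegral_eLpNorm_mul_eLpNorm_le hd hα hβ
    (pow_pos hr 2) _ (fun y hy => hμ _ (hmem (Set.Ioc_subset_Icc_self hy)))
    fun y hy => hν _ (hmem (Set.Ioc_subset_Icc_self hy))))
  rw [← ENNReal.ofReal_add (by positivity) (by positivity),
    ENNReal.ofReal_le_ofReal_iff (by positivity), div_le_iff₀ (by positivity)] at hsum
  refine hsum.trans_eq ?_
  field_simp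
  ring

/- The boundary term `α / T ^ 2` is at most `α * β * (β / K ^ 2)`, which is absorbed by the factor
`1 + 1 / (2 * K ^ 2)` of `CKd K d` because `detailConst d * β ≤ 2`. -/
lemma detail_conv_le_CKd_mul (hd : 0 < d) (hK : 1 ≤ K) (hα : 0 ≤ α) (hβ : 0 < β)
    (hβC : β ≤ (CKd K d)⁻¹) (hT : K ≤ β * T) (hr : 0 < r)
    (hμ : ∀ t ∈ Set.Icc (r / √2) (T * r), detail d μ t ≤ α)
    (hν : ∀ t ∈ Set.Icc (r / √2) (T * r), detail d ν t ≤ β) :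
    detail d (μ ∗ ν) r ≤ CKd K d * α * β := by
  have hc := detailConst_pos hd
  have hc_le := detailConst_le hd
  have hβc : β ≤ detailConst d / 4 := by
    refine hβC.trans ?_
    rw [← inv_div]
    exact inv_anti₀ (by positivity) (four_div_detailConst_le_CKd hd)
  have hT1 : 1 ≤ T := by nlinarith
  have hboundary : α / T ^ 2 ≤ 4 / detailConst d * α * β * (1 / (2 * K ^ 2)) := by
    have hT2 : K ^ 2 ≤ β ^ 2 * T ^ 2 := by
      rw [← mul_pow]
      gcongr
    have hcβ : detailConst d * β ≤ 2 := by nlinarith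
    rw [show 4 / detailConst d * α * β * (1 / (2 * K ^ 2)) =
      2 * α * β / (detailConst d * K ^ 2) by field_simp; ring,
      div_le_div_iff₀ (by positivity) (by positivity)]
    calc α * (detailConst d * K ^ 2) ≤ α * (detailConst d * (β ^ 2 * T ^ 2)) := by gcongr
      _ = α * β * T ^ 2 * (detailConst d * β) := by ring
      _ ≤ α * β * T ^ 2 * 2 := by gcongr
      _ = 2 * α * β * T ^ 2 := by ring
  calc detail d (μ ∗ ν) r ≤ 4 / detailConst d * α * β + α / T ^ 2 :=
        detail_conv_le hd hα hβ.le hr hT1 hμ hν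
    _ ≤ 4 / detailConst d * α * β + 4 / detailConst d * α * β * (1 / (2 * K ^ 2)) := by gcongr
    _ = CKd K d * α * β := by
        rw [CKd_eq]
        ring

end Detail

section Iteration

variable {d : ℕ} {K a r : ℝ}

lemma inv_CKd_le_one : (CKd K d)⁻¹ ≤ 1 := by
  obtain rfl | hd := d.eq_zero_or_pos
  · simp [CKd_zero]
  · exact inv_le_one_of_one_le₀ (one_le_CKd hd)

lemma dim_pos_of_le_inv_CKd (ha : 0 < a) (haC : a ≤ (CKd K d)⁻¹) : 0 < d := by
  rw [Nat.pos_iff_ne_zero]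
  rintro rfl
  rw [CKd_zero, inv_zero] at haC
  exact absurd ha haC.not_gt

/-- The range of scales around `r` on which the details of at most `2 ^ ℓ` measures, with all
bounds at least `a`, have to be controlled to bound the detail of their convolution at scale `r`. -/
def scaleRange (K a : ℝ) (ℓ : ℕ) (r : ℝ) : Set ℝ :=
  Set.Icc (r / √2 ^ ℓ) (K ^ ℓ / a ^ (2 ^ ℓ - 1) * r)

lemma scaleRange_subset_scaleRange_succ (hK : 0 ≤ K) (ha : 0 < a) {ℓ : ℕ} {u : ℝ}
    (hu : u ∈ Set.Icc (r / √2) (K / a ^ 2 ^ ℓ * r)) :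
    scaleRange K a ℓ u ⊆ scaleRange K a (ℓ + 1) r := by
  refine Set.Icc_subset_Icc ?_ ?_
  · rw [pow_succ', ← div_div]
    gcongr
    exact hu.1
  · have hexp : 2 ^ (ℓ + 1) - 1 = 2 ^ ℓ - 1 + 2 ^ ℓ := by
      have := Nat.one_le_two_pow (n := ℓ)
      omega
    calc K ^ ℓ / a ^ (2 ^ ℓ - 1) * u ≤ K ^ ℓ / a ^ (2 ^ ℓ - 1) * (K / a ^ 2 ^ ℓ * r) := by
          gcongr
          exact hu.2
      _ = K ^ (ℓ + 1) / a ^ (2 ^ (ℓ + 1) - 1) * r := by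
          rw [hexp, pow_add a]
          ring

lemma scaleRange_subset_Icc (hK : 1 ≤ K) (ha : 0 < a) (ha1 : a ≤ 1) (hr : 0 ≤ r) {ℓ : ℕ} {m : ℝ}
    (hℓm : ℓ ≤ m) :
    scaleRange K a ℓ r ⊆ Set.Icc (2 ^ (-m / 2) * r) (K ^ m * a ^ (-(m * 2 ^ m)) * r) := by
  have hm : 0 ≤ m := ℓ.cast_nonneg.trans hℓm
  have hpow {b : ℝ} (hb : 1 ≤ b) : b ^ ℓ ≤ b ^ m := by
    rw [← rpow_natCast]
    exact rpow_le_rpow_of_exponent_le hb hℓm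
  refine Set.Icc_subset_Icc ?_ ?_
  · have hsqrt : √2 ^ ℓ ≤ 2 ^ (m / 2) := by
      rw [rpow_div_two_eq_sqrt _ zero_le_two]
      exact hpow (one_le_sqrt.2 one_le_two)
    rw [neg_div, rpow_neg zero_le_two, inv_mul_eq_div]
    gcongr
  · have hexp : ((2 ^ ℓ - 1 : ℕ) : ℝ) ≤ m * 2 ^ m := by
      have hnat : 2 ^ ℓ - 1 ≤ ℓ * 2 ^ ℓ := by
        obtain rfl | hℓ := ℓ.eq_zero_or_pos
        · simp
        · exact (Nat.sub_le _ _).trans (Nat.le_mul_of_pos_left _ hℓ)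
      calc ((2 ^ ℓ - 1 : ℕ) : ℝ) ≤ ℓ * 2 ^ ℓ := mod_cast hnat
        _ ≤ m * 2 ^ m := by
          gcongr
          exact hpow one_le_two
    have hpow_a : (a ^ (2 ^ ℓ - 1))⁻¹ ≤ a ^ (-(m * 2 ^ m)) := by
      rw [← rpow_natCast, ← rpow_neg ha.le]
      exact rpow_le_rpow_of_exponent_ge ha ha1 (neg_le_neg hexp)
    rw [div_eq_mul_inv]
    gcongr
    exact hpow hK

lemma isProbabilityMeasure_convList {l : List (Measure (EuclideanSpace ℝ (Fin d)))}
    (hl : ∀ μ ∈ l, IsProbabilityMeasure μ) : IsProbabilityMeasure (convList l) := by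
  induction l with
  | nil => exact Measure.dirac.isProbabilityMeasure
  | cons μ l ih =>
    rw [List.forall_mem_cons] at hl
    have := hl.1
    have := ih hl.2
    exact inferInstanceAs (IsProbabilityMeasure (μ ∗ convList l))

lemma sFinite_convList {l : List (Measure (EuclideanSpace ℝ (Fin d)))}
    (hl : ∀ μ ∈ l, SFinite μ) : SFinite (convList l) := by
  induction l with
  | nil => exact inferInstanceAs (SFinite (Measure.dirac 0))
  | cons μ l ih =>
    rw [List.forall_mem_cons] at hl
    have := hl.1
    have := ih hl.2
    exact inferInstanceAs (SFinite (μ ∗ convList l))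

lemma convList_append {l l' : List (Measure (EuclideanSpace ℝ (Fin d)))}
    (hl : ∀ μ ∈ l, SFinite μ) (hl' : ∀ μ ∈ l', SFinite μ) :
    convList (l ++ l') = convList l ∗ convList l' := by
  have := sFinite_convList hl'
  induction l with
  | nil => rw [List.nil_append, convList, Measure.dirac_zero_conv]
  | cons μ l ih =>
    rw [List.forall_mem_cons] at hl
    have := hl.1
    have := sFinite_convList hl.2
    rw [List.cons_append, convList, ih hl.2, convList, Measure.conv_assoc]

lemma detail_conv_le_inv_CKd_mul {μ ν : Measure (EuclideanSpace ℝ (Fin d))} [IsFiniteMeasure μ]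
    [IsProbabilityMeasure ν] (hd : 0 < d) (hK : 1 ≤ K) (ha : 0 < a) {N : ℕ} (hN : N ≠ 0)
    {α β : ℝ} (hα : 0 ≤ α) (hβ : (CKd K d * a) ^ N ≤ β) (hβ1 : β ≤ 1) (hr : 0 < r)
    (hμ : ∀ t ∈ Set.Icc (r / √2) (K / a ^ N * r), detail d μ t ≤ (CKd K d)⁻¹ * α)
    (hν : ∀ t ∈ Set.Icc (r / √2) (K / a ^ N * r), detail d ν t ≤ (CKd K d)⁻¹ * β) :
    detail d (μ ∗ ν) r ≤ (CKd K d)⁻¹ * (α * β) := by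
  have hC1 : 1 ≤ CKd K d := one_le_CKd hd
  have := zero_lt_one.trans_le hC1
  have hβ0 : 0 < β := lt_of_lt_of_le (by positivity) hβ
  have hT : K ≤ (CKd K d)⁻¹ * β * (K / a ^ N) := by
    have haβ : CKd K d * a ^ N ≤ β := by
      refine le_trans ?_ hβ
      rw [mul_pow]
      gcongr
      exact le_self_pow₀ hC1 hN
    calc K = (CKd K d)⁻¹ * (CKd K d * a ^ N) * (K / a ^ N) := by field_simp
      _ ≤ (CKd K d)⁻¹ * β * (K / a ^ N) := by gcongr
  refine (detail_conv_le_CKd_mul hd hK (by positivity) (by positivity)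
    (mul_le_of_le_one_right (by positivity) hβ1) hT hr hμ hν).trans_eq ?_
  field_simp

section ListProd

variable {ι : Type*} {f : ι → ℝ} {b : ℝ} {l : List ι}

lemma pow_le_list_prod_map {N : ℕ} (hb : 0 ≤ b) (hbf : ∀ i, b ≤ f i) (hf1 : ∀ i, f i ≤ 1)
    (hl : l ≠ []) (hlen : l.length ≤ N) : b ^ N ≤ (l.map f).prod := by
  have hb1 : b ≤ 1 := (hbf (l.head hl)).trans (hf1 _)
  calc b ^ N ≤ b ^ l.length := pow_le_pow_of_le_one hb hb1 hlen
    _ = (l.map fun _ => b).prod := by rw [List.map_const', List.prod_replicate]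
    _ ≤ (l.map f).prod := List.prod_map_le_prod_map₀ _ f (fun _ _ => hb) fun i _ => hbf i

lemma list_prod_map_le_one (hf0 : ∀ i, 0 ≤ f i) (hf1 : ∀ i, f i ≤ 1) : (l.map f).prod ≤ 1 := by
  simpa using List.prod_map_le_prod_map₀ (s := l) f (fun _ => 1) (fun i _ => hf0 i) fun i _ => hf1 i

end ListProd

variable {ι : Type*} {μ : ι → Measure (EuclideanSpace ℝ (Fin d))}
  [hprob : ∀ i, IsProbabilityMeasure (μ i)] {α : ι → ℝ}

lemma detail_convList_map_append_le (hd : 0 < d) (hK : 1 ≤ K) (ha : 0 < a) (haα : ∀ i, a ≤ α i)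
    (hαC : ∀ i, α i ≤ (CKd K d)⁻¹) {l₁ l₂ : List ι} {N : ℕ} (hl₂ : l₂ ≠ [])
    (hlen : l₂.length ≤ N) (hr : 0 < r)
    (h₁ : ∀ t ∈ Set.Icc (r / √2) (K / a ^ N * r),
      detail d (convList (l₁.map μ)) t ≤ (CKd K d)⁻¹ * (l₁.map fun i => CKd K d * α i).prod)
    (h₂ : ∀ t ∈ Set.Icc (r / √2) (K / a ^ N * r),
      detail d (convList (l₂.map μ)) t ≤ (CKd K d)⁻¹ * (l₂.map fun i => CKd K d * α i).prod) :
    detail d (convList ((l₁ ++ l₂).map μ)) r ≤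
      (CKd K d)⁻¹ * ((l₁ ++ l₂).map fun i => CKd K d * α i).prod := by
  have hC0 : 0 < CKd K d := zero_lt_one.trans_le (one_le_CKd hd)
  have hlower i : CKd K d * a ≤ CKd K d * α i := mul_le_mul_of_nonneg_left (haα i) hC0.le
  have hnonneg i : 0 ≤ CKd K d * α i := (by positivity : 0 ≤ CKd K d * a).trans (hlower i)
  have hupper i : CKd K d * α i ≤ 1 := by
    rw [← le_inv_mul_iff₀ hC0, mul_one]
    exact hαC i
  have hprob_map (l : List ι) : ∀ ν ∈ l.map μ, IsProbabilityMeasure ν :=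
    List.forall_mem_map.2 fun i _ => hprob i
  have := isProbabilityMeasure_convList (hprob_map l₁)
  have := isProbabilityMeasure_convList (hprob_map l₂)
  rw [List.map_append, List.map_append, List.prod_append, convList_append
    (fun ν hν => have := hprob_map l₁ ν hν; inferInstance)
    (fun ν hν => have := hprob_map l₂ ν hν; inferInstance)]
  exact detail_conv_le_inv_CKd_mul hd hK ha ((List.length_pos_iff.2 hl₂).trans_le hlen).ne'
    (List.prod_nonneg (List.forall_mem_map.2 fun i _ => hnonneg i))
    (pow_le_list_prod_map (by positivity) hlower hupper hl₂ hlen)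
    (list_prod_map_le_one hnonneg hupper) hr h₁ h₂

lemma detail_convList_map_le (hd : 0 < d) (hK : 1 ≤ K) (ha : 0 < a) (haα : ∀ i, a ≤ α i)
    (hαC : ∀ i, α i ≤ (CKd K d)⁻¹) {ℓ : ℕ} {l : List ι} (hl : l ≠ []) (hlen : l.length ≤ 2 ^ ℓ)
    (hr : 0 < r) (h : ∀ t ∈ scaleRange K a ℓ r, ∀ i, detail d (μ i) t ≤ α i) :
    detail d (convList (l.map μ)) r ≤ (CKd K d)⁻¹ * (l.map fun i => CKd K d * α i).prod := by
  induction ℓ generalizing l r with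
  | zero =>
    have hC0 : CKd K d ≠ 0 := (zero_lt_one.trans_le (one_le_CKd hd)).ne'
    obtain ⟨i, rfl⟩ := List.length_eq_one_iff.1 (hlen.antisymm (List.length_pos_iff.2 hl))
    simpa [convList, Measure.conv_dirac_zero, hC0] using h r (by simp [scaleRange]) i
  | succ ℓ ih =>
    have hblock {l : List ι} (hl : l ≠ []) (hlen : l.length ≤ 2 ^ ℓ) (u : ℝ)
        (hu : u ∈ Set.Icc (r / √2) (K / a ^ 2 ^ ℓ * r)) :
        detail d (convList (l.map μ)) u ≤ (CKd K d)⁻¹ * (l.map fun i => CKd K d * α i).prod :=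
      ih hl hlen ((by positivity : 0 < r / √2).trans_le hu.1) fun t ht =>
        h t (scaleRange_subset_scaleRange_succ (by positivity) ha hu ht)
    obtain hle | hlt := le_or_gt l.length (2 ^ ℓ)
    · have ha1 : a ≤ 1 := ((haα (l.head hl)).trans (hαC _)).trans inv_CKd_le_one
      refine hblock hl hle r ⟨div_le_self hr.le (one_le_sqrt.2 one_le_two), ?_⟩
      exact le_mul_of_one_le_left hr.le
        ((one_le_div (by positivity)).2 ((pow_le_one₀ ha.le ha1).trans hK))
    obtain ⟨l₁, l₂, rfl, hlen₁⟩ : ∃ l₁ l₂, l = l₁ ++ l₂ ∧ l₁.length = 2 ^ ℓ :=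
      ⟨l.take (2 ^ ℓ), l.drop (2 ^ ℓ), (List.take_append_drop _ l).symm,
        List.length_take_of_le hlt.le⟩
    rw [List.length_append] at hlt hlen
    have hlen₂ : l₂.length ≤ 2 ^ ℓ := by
      rw [pow_succ] at hlen
      omega
    have hl₁ : l₁ ≠ [] := List.length_pos_iff.1 (hlen₁ ▸ by positivity)
    have hl₂ : l₂ ≠ [] := List.length_pos_iff.1 (by omega)
    exact detail_convList_map_append_le hd hK ha haα hαC hl₂ hlen₂ hr (hblock hl₁ hlen₁.le)
      (hblock hl₂ hlen₂)

end Iteration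

lemma clog_two_le_log_div_log {n : ℕ} (hn : 0 < n) :
    (Nat.clog 2 n : ℝ) ≤ log n / log (3 / 2) := by
  have hpow_succ (k : ℕ) : (3 / 2 : ℝ) ^ (k + 1) ≤ 2 ^ k + 1 := by
    induction k with
    | zero => norm_num
    | succ k ih =>
      rw [pow_succ, pow_succ (2 : ℝ)]
      linarith [one_le_pow₀ (M₀ := ℝ) one_le_two (n := k)]
  have hpow : (3 / 2 : ℝ) ^ Nat.clog 2 n ≤ n := by
    cases hk : Nat.clog 2 n with
    | zero =>
      rw [pow_zero]
      exact mod_cast hn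
    | succ k =>
      refine (hpow_succ k).trans ?_
      have hlt : 2 ^ k < n := (Nat.lt_clog_iff_pow_lt one_lt_two).1 (by omega)
      exact mod_cast hlt
  rw [le_div_iff₀ (log_pos (by norm_num)), ← log_pow]
  gcongr

theorem statement2_general {d n : ℕ} (hn : 0 < n) {K : ℝ} (hK : 1 ≤ K)
    {μ : Fin n → Measure (EuclideanSpace ℝ (Fin d))} (hprob : ∀ i, IsProbabilityMeasure (μ i))
    {α : Fin n → ℝ} {a : ℝ} (ha : 0 < a) (haα : ∀ i, a ≤ α i) (hαC : ∀ i, α i ≤ (CKd K d)⁻¹)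
    {ℓ : ℕ} (hℓ : n ≤ 2 ^ ℓ) {r : ℝ} (hr : 0 < r)
    (h : ∀ t ∈ scaleRange K a ℓ r, ∀ i, detail d (μ i) t ≤ α i) :
    detail d (convList (List.ofFn μ)) r ≤ CKd K d ^ (n - 1) * ∏ i, α i := by
  have hd := dim_pos_of_le_inv_CKd ha ((haα ⟨0, hn⟩).trans (hαC _))
  have hC0 : CKd K d ≠ 0 := (zero_lt_one.trans_le (one_le_CKd hd)).ne'
  have hbound := detail_convList_map_le hd hK ha haα hαC (l := List.finRange n)
    (List.length_pos_iff.1 (by rwa [List.length_finRange])) (by rwa [List.length_finRange]) hr h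
  rwa [← List.ofFn_eq_map, ← List.ofFn_eq_map, List.prod_ofFn, Finset.prod_mul_distrib,
    Finset.prod_const, Finset.card_univ, Fintype.card_fin, ← mul_assoc, mul_comm (CKd K d)⁻¹,
    ← pow_sub_one_mul hn.ne', mul_inv_cancel_right₀ hC0] at hbound

theorem statement2 {d : ℕ} (n : ℕ) (hn : 0 < n) (K : ℝ) (hK : 1 < K)
    (μ : Fin n → Measure (EuclideanSpace ℝ (Fin d)))
    (hprob : ∀ i, IsProbabilityMeasure (μ i))
    (α : Fin n → ℝ) (hmono : Monotone α)
    (hpos : 0 < α ⟨0, hn⟩) (hlt : α ⟨n - 1, by omega⟩ < (CKd K d)⁻¹)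
    (m r : ℝ) (hm : m = Real.log n / Real.log (3 / 2)) (hr : 0 < r)
    (h : ∀ t ∈ Set.Icc ((2 : ℝ) ^ (-m / 2) * r)
        (K ^ m * (α ⟨0, hn⟩) ^ (-(m * 2 ^ m)) * r),
      ∀ i, detail d (μ i) t ≤ α i) :
    detail d (convList (List.ofFn μ)) r ≤ CKd K d ^ (n - 1) * ∏ i, α i := by
  have hαC i : α i ≤ (CKd K d)⁻¹ := (hmono (Nat.le_sub_one_of_lt i.isLt)).trans hlt.le
  exact statement2_general hn hK.le hprob hpos (fun i => hmono (Nat.zero_le i)) hαC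
    (Nat.le_pow_clog one_lt_two n) hr fun t ht => h t <| scaleRange_subset_Icc hK.le hpos
      ((hαC _).trans inv_CKd_le_one) hr.le (hm ▸ clog_two_le_log_div_log hn) ht
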